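/- Consider the dynamic discrete choice model with finite state space X = {1,…,K}, and let F₀ be a probability distribution on ℝ^J with finite first moments whose density is positive everywhere on ℝ^J. Then there exists a finite mixture of Gumbel distributions F, i.e., F with density Σ_{k=1}^m ω_k φ(·; μ_k, σ) for some m ∈ ℤ⁺, weights ω_k > 0 summing to 1, locations μ_k ∈ ℝ^J and a common scale σ > 0, such that the conditional choice probabilities coincide: p(d|x;F₀) = p(d|x;F) for all d ∈ {0,1,…,J} and all x ∈ X. -/

import Mathlib

open MeasureTheory Real

/-- The standardized univariate Gumbel density `φ(z) = exp(−z − γ − e^{−(z+γ)})`. -/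
noncomputable def gumbelPdf (z : ℝ) : ℝ :=
  Real.exp (-z - Real.eulerMascheroniConstant - Real.exp (-(z + Real.eulerMascheroniConstant)))

/-- The multivariate Gumbel density `φ(z; μ, σ) = ∏_j (1/σ) φ((z_j − μ_j)/σ)`. -/
noncomputable def mGumbelPdf {J : ℕ} (μ : Fin J → ℝ) (σ : ℝ) (z : Fin J → ℝ) : ℝ :=
  ∏ j, (1 / σ) * gumbelPdf ((z j - μ j) / σ)

/-- Extension of the shock vector `ε ∈ ℝ^J` by the normalization `ε₀ = 0`. -/
noncomputable def epsExt {J : ℕ} (z : Fin J → ℝ) : Fin (J + 1) → ℝ := Fin.cases 0 z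

/-!
The Emax function and the choice probabilities under `F₀` are finitely many moments of `F₀`, of
functions that have linear growth and are continuous off the null boundaries of the choice regions.
Keeping `Q` fixed, it suffices to match these moments by a location mixture of Gumbel densities.
Let `g` be the vector of moment functions, `m` its mean under `F₀`, and `T_σ(a)` its mean under the
Gumbel distribution with location `a` and scale `σ`; then `T_σ(a) → g(a)` for almost every `a` as
`σ → 0`. The moments of the mixtures of scale `σ` form the convex hull of the range of `T_σ`.

If `m` avoided these convex hulls along a sequence `σ_n → 0`, a limit of separating functionals
would give a functional `f`, not constantly `f(m)` on the vectors `T_{σ_n}(a)`, such that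
`f(g) ≤ f(m)` almost everywhere. As `f(g)` has mean `f(m)` under the fully supported `F₀`, it would
equal `f(m)` almost everywhere, and then so would its Gumbel means `f(T_{σ_n}(a))`: a contradiction.
-/

open Filter Topology Module

section Separation

variable {F : Type*} [NormedAddCommGroup F] [NormedSpace ℝ F] [FiniteDimensional ℝ F]

lemma exists_ne_zero_forall_le_of_notMem_convex {C : Set F} (hC : Convex ℝ C) (hne : C.Nonempty)
    {x : F} (hx : x ∉ C) : ∃ f : StrongDual ℝ F, f ≠ 0 ∧ ∀ c ∈ C, f c ≤ f x := by
  by_cases hint : (interior C).Nonempty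
  · exact geometric_hahn_banach_of_nonempty_interior_point hC (fun h => hx (interior_subset h)) hint
  obtain ⟨c₀, hc₀⟩ := hne
  have hspan : vectorSpan ℝ C < ⊤ := lt_top_iff_ne_top.2 fun h => hint <|
    hC.interior_nonempty_iff_affineSpan_eq_top.2 <|
      (AffineSubspace.affineSpan_eq_top_iff_vectorSpan_eq_top_of_nonempty ℝ F F ⟨c₀, hc₀⟩).2 h
  obtain ⟨f, hf, hker⟩ := Submodule.exists_le_ker_of_lt_top _ hspan
  have hconst : ∀ c ∈ C, f c = f c₀ := fun c hc => sub_eq_zero.1 <| by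
    rw [← map_sub]
    exact hker (vsub_mem_vectorSpan ℝ hc hc₀)
  have hf' : f.toContinuousLinearMap ≠ 0 := by simpa using hf
  rcases le_total (f c₀) (f x) with h | h
  · exact ⟨f.toContinuousLinearMap, hf', fun c hc => by simpa [hconst c hc] using h⟩
  · exact ⟨-f.toContinuousLinearMap, neg_ne_zero.2 hf', fun c hc => by simpa [hconst c hc] using h⟩

variable {α : Type*} [Nonempty α] {T : ℕ → α → F} {m : F}

lemma exists_ne_zero_forall_tendsto_le (hm : ∀ n, m ∉ convexHull ℝ (Set.range (T n))) :
    ∃ f : StrongDual ℝ F, f ≠ 0 ∧ ∀ z y, Tendsto (T · z) atTop (𝓝 y) → f y ≤ f m := by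
  have hunit : ∀ n, ∃ f : StrongDual ℝ F, ‖f‖ = 1 ∧ ∀ z, f (T n z) ≤ f m := fun n => by
    obtain ⟨f, hf, hle⟩ := exists_ne_zero_forall_le_of_notMem_convex (convex_convexHull ℝ _)
      ((Set.range_nonempty (T n)).convexHull) (hm n)
    refine ⟨‖f‖⁻¹ • f, norm_smul_inv_norm hf, fun z => ?_⟩
    exact mul_le_mul_of_nonneg_left (hle _ (subset_convexHull ℝ _ ⟨z, rfl⟩)) (by positivity)
  choose f hf hle using hunit
  have : ProperSpace (StrongDual ℝ F) := FiniteDimensional.proper_real _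
  obtain ⟨f₀, hf₀, k, hk, hlim⟩ :=
    (isCompact_sphere (0 : StrongDual ℝ F) 1).tendsto_subseq (x := f) fun n => by simp [hf]
  refine ⟨f₀, ne_zero_of_mem_unit_sphere ⟨f₀, hf₀⟩, fun z y hy => ?_⟩
  have happly : ∀ {w : ℕ → F} {w₀ : F}, Tendsto w atTop (𝓝 w₀) →
      Tendsto (fun n => f (k n) (w n)) atTop (𝓝 (f₀ w₀)) := fun hw =>
    (isBoundedBilinearMap_apply.continuous.tendsto (f₀, _)).comp (hlim.prodMk_nhds hw)
  exact le_of_tendsto_of_tendsto' (happly (hy.comp hk.tendsto_atTop))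
    (happly tendsto_const_nhds) fun n => hle _ z

lemma exists_separating_forall_tendsto_le (hm : ∀ n, m ∉ convexHull ℝ (Set.range (T n))) :
    ∃ f : StrongDual ℝ F, (∃ n z, f (T n z) ≠ f m) ∧
      ∀ z y, Tendsto (T · z) atTop (𝓝 y) → f y ≤ f m := by
  -- Separating inside the span `W` keeps the limit functional from vanishing on all `T n z - m`.
  let W : Submodule ℝ F := Submodule.span ℝ (Set.range fun q : ℕ × α => T q.1 q.2 - m)
  let S : ℕ → α → W := fun n z => ⟨T n z - m, Submodule.subset_span ⟨(n, z), rfl⟩⟩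
  have hS : ∀ n, (0 : W) ∉ convexHull ℝ (Set.range (S n)) := fun n h => hm n <| by
    let A : W →ᵃ[ℝ] F := W.subtype.toAffineMap + AffineMap.const ℝ W m
    have hA : A '' Set.range (S n) = Set.range (T n) := by
      rw [← Set.range_comp]
      simp [A, S, Function.comp_def]
    rw [← hA, ← A.image_convexHull]
    exact ⟨0, h, by simp [A]⟩
  obtain ⟨f, hf, hle⟩ := exists_ne_zero_forall_tendsto_le hS
  obtain ⟨φ, hφ, -⟩ := exists_extension_norm_eq W f
  refine ⟨φ, ?_, fun z y hy => ?_⟩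
  · contrapose! hf
    have hker : W ≤ φ.ker := Submodule.span_le.2 <| by
      rintro _ ⟨⟨n, z⟩, rfl⟩
      simp [hf n z]
    ext w
    simpa [← hφ] using hker w.2
  · have hlim : Tendsto (fun n => T n z - m) atTop (𝓝 (y - m)) := hy.sub_const m
    have hyW : y - m ∈ W := W.closed_of_finiteDimensional.mem_of_tendsto hlim
      (Eventually.of_forall fun n => (S n z).2)
    have := hle z ⟨y - m, hyW⟩ (tendsto_subtype_rng.2 hlim)
    simpa [← hφ] using this

end Separation

theorem exists_integral_mem_convexHull_range {α F : Type*} [MeasurableSpace α] {P : Measure α}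
    [IsProbabilityMeasure P] [NormedAddCommGroup F] [NormedSpace ℝ F] [FiniteDimensional ℝ F]
    {g : α → F} (hg : Integrable g P) {T : ℕ → α → F}
    (hT : ∀ᵐ z ∂P, Tendsto (T · z) atTop (𝓝 (g z)))
    (hconst : ∀ (f : StrongDual ℝ F) (c : ℝ), (∀ᵐ z ∂P, f (g z) = c) → ∀ n z, f (T n z) = c) :
    ∃ n, ∫ z, g z ∂P ∈ convexHull ℝ (Set.range (T n)) := by
  have := FiniteDimensional.complete ℝ F
  have := P.nonempty_of_neZero
  by_contra! hno
  obtain ⟨f, ⟨n, z, hne⟩, hle⟩ := exists_separating_forall_tendsto_le hno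
  have hfg : Integrable (fun z => f (g z)) P := f.integrable_comp hg
  have hmean : ∫ z, f (g z) ∂P = f (∫ z, g z ∂P) := f.integral_comp_comm hg
  have hgap : 0 ≤ᵐ[P] fun z => f (∫ z, g z ∂P) - f (g z) := by
    filter_upwards [hT] with z hz using sub_nonneg.2 (hle z _ hz)
  have hgap_zero : ∫ z, (f (∫ z, g z ∂P) - f (g z)) ∂P = 0 := by
    rw [integral_sub (integrable_const _) hfg, hmean]
    simp
  have hae := (integral_eq_zero_iff_of_nonneg_ae hgap ((integrable_const _).sub hfg)).1 hgap_zero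
  refine hne (hconst f _ ?_ n z)
  filter_upwards [hae] with z hz using (sub_eq_zero.1 hz).symm

section LinearGrowth

variable {E F : Type*} [NormedAddCommGroup E] [NormedAddCommGroup F] {g : E → F}

/-- At most linear growth at infinity, so that distributions with finite first moments integrate
the function as soon as it is measurable. -/
def HasLinearGrowth (g : E → F) : Prop := ∃ C : ℝ, ∀ z, ‖g z‖ ≤ C * (1 + ‖z‖)

lemma HasLinearGrowth.pi {ι : Type*} [Fintype ι] {g : ι → E → ℝ}
    (hg : ∀ i, HasLinearGrowth (g i)) : HasLinearGrowth fun z i => g i z := by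
  choose C hC using hg
  refine ⟨∑ i, |C i|, fun z => (pi_norm_le_iff_of_nonneg (by positivity)).2 fun i => ?_⟩
  calc ‖g i z‖ ≤ C i * (1 + ‖z‖) := hC i z
    _ ≤ (∑ i, |C i|) * (1 + ‖z‖) := by
      gcongr
      exact (le_abs_self _).trans
        (Finset.single_le_sum (f := fun i => |C i|) (fun _ _ => abs_nonneg _) (Finset.mem_univ i))

lemma hasLinearGrowth_indicator_one (s : Set E) :
    HasLinearGrowth (s.indicator fun _ => (1 : ℝ)) := by
  refine ⟨1, fun z => (norm_indicator_le_norm_self _ z).trans ?_⟩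
  simp

lemma HasLinearGrowth.exists_norm_comp_add_smul_le [NormedSpace ℝ E] (hg : HasLinearGrowth g)
    (a : E) (r : ℝ) :
    ∃ C, ∀ σ : ℝ, |σ| ≤ r → ∀ y, ‖g (a + σ • y)‖ ≤ C * (1 + ‖y‖) := by
  obtain ⟨C, hC⟩ := hg
  have hC0 : 0 ≤ C := by simpa using (norm_nonneg _).trans (hC 0)
  refine ⟨C * (1 + ‖a‖ + r), fun σ hσ y => (hC _).trans ?_⟩
  have hr : 0 ≤ r := (abs_nonneg σ).trans hσ
  rw [mul_assoc]
  gcongr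
  calc 1 + ‖a + σ • y‖ ≤ 1 + (‖a‖ + r * ‖y‖) := by
        grw [norm_add_le, norm_smul, Real.norm_eq_abs, hσ]
    _ ≤ (1 + ‖a‖ + r) * (1 + ‖y‖) := by
        nlinarith [norm_nonneg y, mul_nonneg (norm_nonneg a) (norm_nonneg y)]

lemma HasLinearGrowth.comp_add_smul [NormedSpace ℝ E] (hg : HasLinearGrowth g) (a : E) (σ : ℝ) :
    HasLinearGrowth fun y => g (a + σ • y) :=
  (hg.exists_norm_comp_add_smul_le a |σ|).imp fun _ hC => hC σ le_rfl

variable [NormedSpace ℝ F]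

lemma norm_smul_le_of_norm_le {q C : ℝ} {y : E} {w : F} (hw : ‖w‖ ≤ C * (1 + ‖y‖)) :
    ‖q • w‖ ≤ C * (‖q‖ + ‖‖y‖ * q‖) := by
  calc ‖q • w‖ = ‖q‖ * ‖w‖ := norm_smul _ _
    _ ≤ ‖q‖ * (C * (1 + ‖y‖)) := by grw [hw]
    _ = C * (‖q‖ + ‖‖y‖ * q‖) := by rw [norm_mul, norm_norm]; ring

variable [MeasurableSpace E] {ν : Measure E} {p : E → ℝ}

lemma HasLinearGrowth.integrable_smul (hg : HasLinearGrowth g) (hgm : AEStronglyMeasurable g ν)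
    (hp : Integrable p ν) (hpn : Integrable (fun y => ‖y‖ * p y) ν) :
    Integrable (fun y => p y • g y) ν := by
  obtain ⟨C, hC⟩ := hg
  refine ((hp.norm.add hpn.norm).const_mul C).mono' (hp.aestronglyMeasurable.smul hgm)
    (ae_of_all _ fun y => norm_smul_le_of_norm_le (hC y))

lemma HasLinearGrowth.tendsto_integral_smul_comp_add_smul [NormedSpace ℝ E] [BorelSpace E]
    (hg : HasLinearGrowth g) (hgm : StronglyMeasurable g) (hp : Integrable p ν)
    (hpn : Integrable (fun y => ‖y‖ * p y) ν) {a : E} (hga : ContinuousAt g a) :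
    Tendsto (fun σ : ℝ => ∫ y, p y • g (a + σ • y) ∂ν) (𝓝 0) (𝓝 (∫ y, p y • g a ∂ν)) := by
  obtain ⟨C, hC⟩ := hg.exists_norm_comp_add_smul_le a 1
  refine tendsto_integral_filter_of_dominated_convergence
    (fun y => C * (‖p y‖ + ‖‖y‖ * p y‖)) (Eventually.of_forall fun σ => ?_) ?_
    ((hp.norm.add hpn.norm).const_mul C) (ae_of_all _ fun y => ?_)
  · exact hp.aestronglyMeasurable.smul (hgm.comp_measurable (by fun_prop)).aestronglyMeasurable
  · filter_upwards [Metric.closedBall_mem_nhds (0 : ℝ) one_pos] with σ hσ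
    exact ae_of_all _ fun y => norm_smul_le_of_norm_le (hC σ (by simpa using hσ) y)
  · have hline : Tendsto (fun σ : ℝ => a + σ • y) (𝓝 0) (𝓝 a) := by
      simpa using ((continuous_id.smul continuous_const).const_add a).tendsto (0 : ℝ)
    exact (hga.tendsto.comp hline).const_smul (p y)

end LinearGrowth

section LocationScale

variable {E : Type*} [NormedAddCommGroup E] [NormedSpace ℝ E]

/-- The density of `a + σ Y` for `σ > 0`, where the `E`-valued random variable `Y` has
density `p`. -/
noncomputable def locationScalePdf (p : E → ℝ) (a : E) (σ : ℝ) (z : E) : ℝ :=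
  (σ⁻¹) ^ finrank ℝ E * p (σ⁻¹ • (z - a))

variable {F : Type*} [NormedAddCommGroup F] [NormedSpace ℝ F]

lemma locationScalePdf_smul_eq {σ : ℝ} (hσ : σ ≠ 0) (p : E → ℝ) (g : E → F) (a z : E) :
    locationScalePdf p a σ z • g z =
      (σ⁻¹) ^ finrank ℝ E • (fun y => p y • g (a + σ • y)) (σ⁻¹ • (z - a)) := by
  simp only [locationScalePdf, smul_inv_smul₀ hσ, add_sub_cancel, mul_smul]

variable [FiniteDimensional ℝ E] [MeasurableSpace E] [BorelSpace E] {ν : Measure E}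
  [ν.IsAddHaarMeasure] {p : E → ℝ} {g : E → F} {a : E}

lemma integral_locationScalePdf_smul {σ : ℝ} (hσ : 0 < σ) :
    ∫ z, locationScalePdf p a σ z • g z ∂ν = ∫ y, p y • g (a + σ • y) ∂ν := by
  simp_rw [locationScalePdf_smul_eq hσ.ne']
  rw [integral_smul, integral_sub_right_eq_self
    (fun w => (fun y => p y • g (a + σ • y)) (σ⁻¹ • w)), Measure.integral_comp_smul ν
    (fun y => p y • g (a + σ • y)),
    smul_smul, abs_of_nonneg (by positivity), mul_inv_cancel₀ (by positivity), one_smul]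

lemma integrable_locationScalePdf_smul {σ : ℝ} (hσ : σ ≠ 0)
    (h : Integrable (fun y => p y • g (a + σ • y)) ν) :
    Integrable (fun z => locationScalePdf p a σ z • g z) ν := by
  simp_rw [locationScalePdf_smul_eq hσ]
  exact (((integrable_comp_smul_iff ν _ (inv_ne_zero hσ)).2 h).comp_sub_right a).smul _

lemma HasLinearGrowth.integrable_locationScalePdf_smul (hg : HasLinearGrowth g)
    (hgm : StronglyMeasurable g) (hp : Integrable p ν)
    (hpn : Integrable (fun y => ‖y‖ * p y) ν) (a : E) {σ : ℝ} (hσ : σ ≠ 0) :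
    Integrable (fun z => locationScalePdf p a σ z • g z) ν :=
  _root_.integrable_locationScalePdf_smul hσ <| (hg.comp_add_smul a σ).integrable_smul
    (hgm.comp_measurable (by fun_prop)).aestronglyMeasurable hp hpn

variable [FiniteDimensional ℝ F]

theorem exists_integral_mem_convexHull_range_locationScalePdf {P : Measure E}
    [IsProbabilityMeasure P] (hP : ν ≪ P) (hP' : P ≪ ν) (hp : ∫ y, p y ∂ν = 1)
    (hpn : Integrable (fun y => ‖y‖ * p y) ν) (hg : HasLinearGrowth g)
    (hgm : StronglyMeasurable g) (hgP : Integrable g P) (hgc : ∀ᵐ z ∂ν, ContinuousAt g z) :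
    ∃ σ > 0, ∫ z, g z ∂P ∈
      convexHull ℝ (Set.range fun a => ∫ z, locationScalePdf p a σ z • g z ∂ν) := by
  have hpi : Integrable p ν := integrable_of_integral_eq_one hp
  have hpos : ∀ n : ℕ, 0 < 1 / ((n : ℝ) + 1) := fun n => by positivity
  have hlim : ∀ᵐ a ∂P, Tendsto
      (fun n : ℕ => ∫ z, locationScalePdf p a (1 / ((n : ℝ) + 1)) z • g z ∂ν) atTop (𝓝 (g a)) := by
    filter_upwards [hP'.ae_le hgc] with a ha
    have hcomp := (hg.tendsto_integral_smul_comp_add_smul hgm hpi hpn ha).comp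
      (tendsto_one_div_add_atTop_nhds_zero_nat (𝕜 := ℝ))
    rw [integral_smul_const, hp, one_smul] at hcomp
    exact hcomp.congr fun n => (integral_locationScalePdf_smul (hpos n)).symm
  obtain ⟨n, hn⟩ := exists_integral_mem_convexHull_range hgP hlim fun f c hc n a => by
    have := FiniteDimensional.complete ℝ F
    have hint := hg.integrable_locationScalePdf_smul hgm hpi hpn a (hpos n).ne'
    calc f (∫ z, locationScalePdf p a (1 / ((n : ℝ) + 1)) z • g z ∂ν)
        = ∫ z, locationScalePdf p a (1 / ((n : ℝ) + 1)) z • f (g z) ∂ν := by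
          simp_rw [← f.integral_comp_comm hint, map_smul]
      _ = ∫ z, locationScalePdf p a (1 / ((n : ℝ) + 1)) z • c ∂ν :=
          integral_congr_ae <| by filter_upwards [hP.ae_le hc] with z hz using by rw [hz]
      _ = c := by rw [integral_locationScalePdf_smul (hpos n), integral_smul_const, hp, one_smul]
  exact ⟨_, hpos n, hn⟩

end LocationScale

lemma exists_pos_weights_of_mem_convexHull_range {α F : Type*} [AddCommGroup F] [Module ℝ F]
    {f : α → F} {x : F} (hx : x ∈ convexHull ℝ (Set.range f)) :
    ∃ (m : ℕ) (w : Fin m → ℝ) (a : Fin m → α),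
      (∀ k, 0 < w k) ∧ ∑ k, w k = 1 ∧ ∑ k, w k • f (a k) = x := by
  obtain ⟨κ, _, y, w, hy, -, hw, hw1, hwx⟩ := eq_pos_convex_span_of_mem_convexHull hx
  choose a ha using fun k => hy ⟨k, rfl⟩
  let e := (Fintype.equivFin κ).symm
  refine ⟨Fintype.card κ, w ∘ e, a ∘ e, fun k => hw _, (e.sum_comp w).trans hw1, ?_⟩
  simp_rw [← hwx, ← ha]
  exact e.sum_comp fun k => w k • f (a k)

section Density

variable {α F : Type*} [MeasurableSpace α] {ν : Measure α} {f : α → ℝ}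
  [NormedAddCommGroup F] [NormedSpace ℝ F] {g : α → F}

lemma isProbabilityMeasure_withDensity_ofReal (hf : 0 ≤ᵐ[ν] f) (hf1 : ∫ z, f z ∂ν = 1) :
    IsProbabilityMeasure (ν.withDensity fun z => ENNReal.ofReal (f z)) :=
  ⟨by rw [withDensity_apply _ MeasurableSet.univ, Measure.restrict_univ,
    ← ofReal_integral_eq_lintegral_ofReal (integrable_of_integral_eq_one hf1) hf, hf1,
    ENNReal.ofReal_one]⟩

lemma integral_withDensity_ofReal (hf : 0 ≤ᵐ[ν] f) (hfm : AEMeasurable f ν) :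
    ∫ z, g z ∂ν.withDensity (fun z => ENNReal.ofReal (f z)) = ∫ z, f z • g z ∂ν := by
  rw [integral_withDensity_eq_integral_toReal_smul₀ hfm.ennreal_ofReal
    (ae_of_all _ fun _ => ENNReal.ofReal_lt_top)]
  exact integral_congr_ae <| hf.mono fun z hz => by simp only [ENNReal.toReal_ofReal hz]

lemma integrable_withDensity_ofReal_iff (hf : 0 ≤ᵐ[ν] f) (hfm : AEMeasurable f ν) :
    Integrable g (ν.withDensity fun z => ENNReal.ofReal (f z)) ↔
      Integrable (fun z => f z • g z) ν := by
  rw [integrable_withDensity_iff_integrable_smul₀' hfm.ennreal_ofReal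
    (ae_of_all _ fun _ => ENNReal.ofReal_lt_top)]
  exact integrable_congr <| hf.mono fun z hz => by simp only [ENNReal.toReal_ofReal hz]

end Density

theorem exists_locationScale_mixture_integral_eq {E F : Type*} [NormedAddCommGroup E]
    [NormedSpace ℝ E] [FiniteDimensional ℝ E] [MeasurableSpace E] [BorelSpace E]
    {ν : Measure E} [ν.IsAddHaarMeasure] [NormedAddCommGroup F] [NormedSpace ℝ F]
    [FiniteDimensional ℝ F] {p f : E → ℝ} {g : E → F}
    (hp : ∫ y, p y ∂ν = 1) (hpn : Integrable (fun y => ‖y‖ * p y) ν)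
    (hf : ∀ᵐ z ∂ν, 0 < f z) (hf1 : ∫ z, f z ∂ν = 1) (hfn : Integrable (fun z => ‖z‖ * f z) ν)
    (hg : HasLinearGrowth g) (hgm : StronglyMeasurable g) (hgc : ∀ᵐ z ∂ν, ContinuousAt g z) :
    ∃ (m : ℕ) (ω : Fin m → ℝ) (μ : Fin m → E) (σ : ℝ),
      (∀ k, 0 < ω k) ∧ ∑ k, ω k = 1 ∧ 0 < σ ∧
      ∑ k, ω k • ∫ z, locationScalePdf p (μ k) σ z • g z ∂ν = ∫ z, f z • g z ∂ν := by
  have hfi : Integrable f ν := integrable_of_integral_eq_one hf1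
  have hf0 : 0 ≤ᵐ[ν] f := hf.mono fun _ => le_of_lt
  have := isProbabilityMeasure_withDensity_ofReal hf0 hf1
  have hac : ν ≪ ν.withDensity fun z => ENNReal.ofReal (f z) :=
    withDensity_absolutelyContinuous' hfi.aemeasurable.ennreal_ofReal
      (hf.mono fun z hz => by simpa using hz)
  obtain ⟨σ, hσ, hmem⟩ := exists_integral_mem_convexHull_range_locationScalePdf hac
    (withDensity_absolutelyContinuous _ _) hp hpn hg hgm
    ((integrable_withDensity_ofReal_iff hf0 hfi.aemeasurable).2
      (hg.integrable_smul hgm.aestronglyMeasurable hfi hfn)) hgc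
  obtain ⟨m, ω, μ, hω, hω1, hsum⟩ := exists_pos_weights_of_mem_convexHull_range hmem
  exact ⟨m, ω, μ, σ, hω, hω1, hσ, hsum.trans (integral_withDensity_ofReal hf0 hfi.aemeasurable)⟩

theorem exists_locationScale_mixture_forall_integral_eq {ι E : Type*} [Finite ι]
    [NormedAddCommGroup E] [NormedSpace ℝ E] [FiniteDimensional ℝ E] [MeasurableSpace E]
    [BorelSpace E] {ν : Measure E} [ν.IsAddHaarMeasure] {p f : E → ℝ} {g : ι → E → ℝ}
    (hp : ∫ y, p y ∂ν = 1) (hpn : Integrable (fun y => ‖y‖ * p y) ν)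
    (hf : ∀ᵐ z ∂ν, 0 < f z) (hf1 : ∫ z, f z ∂ν = 1) (hfn : Integrable (fun z => ‖z‖ * f z) ν)
    (hg : ∀ i, HasLinearGrowth (g i)) (hgm : ∀ i, Measurable (g i))
    (hgc : ∀ i, ∀ᵐ z ∂ν, ContinuousAt (g i) z) :
    ∃ (m : ℕ) (ω : Fin m → ℝ) (μ : Fin m → E) (σ : ℝ),
      (∀ k, 0 < ω k) ∧ ∑ k, ω k = 1 ∧ 0 < σ ∧
      ∀ i, ∫ z, f z * g i z ∂ν = ∫ z, (∑ k, ω k * locationScalePdf p (μ k) σ z) * g i z ∂ν := by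
  have := Fintype.ofFinite ι
  obtain ⟨m, ω, μ, σ, hω, hω1, hσ, hsum⟩ := exists_locationScale_mixture_integral_eq hp hpn hf hf1
    hfn (HasLinearGrowth.pi hg) (measurable_pi_iff.2 hgm).stronglyMeasurable
    ((ae_all_iff.2 hgc).mono fun z hz => continuousAt_pi.2 hz)
  have hfg : ∀ i, Integrable (fun z => f z * g i z) ν := fun i =>
    (hg i).integrable_smul (hgm i).aestronglyMeasurable (integrable_of_integral_eq_one hf1) hfn
  have hpg : ∀ k i, Integrable (fun z => locationScalePdf p (μ k) σ z * g i z) ν := fun k i =>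
    (hg i).integrable_locationScalePdf_smul (hgm i).stronglyMeasurable
      (integrable_of_integral_eq_one hp) hpn (μ k) hσ.ne'
  refine ⟨m, ω, μ, σ, hω, hω1, hσ, fun i => ?_⟩
  calc ∫ z, f z * g i z ∂ν = (∫ z, f z • (fun i => g i z) ∂ν) i := (eval_integral hfg i).symm
    _ = (∑ k, ω k • ∫ z, locationScalePdf p (μ k) σ z • (fun i => g i z) ∂ν) i := by rw [hsum]
    _ = ∑ k, ω k * (∫ z, locationScalePdf p (μ k) σ z • (fun i => g i z) ∂ν) i := by simp
    _ = ∑ k, ω k * ∫ z, locationScalePdf p (μ k) σ z * g i z ∂ν := by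
      congr! with k
      exact eval_integral (hpg k) i
    _ = ∫ z, ∑ k, ω k * (locationScalePdf p (μ k) σ z * g i z) ∂ν := by
      rw [integral_finsetSum _ fun k _ => (hpg k i).const_mul _]
      simp_rw [integral_const_mul]
    _ = ∫ z, (∑ k, ω k * locationScalePdf p (μ k) σ z) * g i z ∂ν := by
      simp_rw [Finset.sum_mul, mul_assoc]

section Gumbel

lemma gumbelPdf_nonneg (z : ℝ) : 0 ≤ gumbelPdf z := (Real.exp_pos _).le

lemma continuous_gumbelPdf : Continuous gumbelPdf := by
  unfold gumbelPdf
  fun_prop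

lemma neg_sub_exp_neg_le_neg_abs (t : ℝ) : -t - Real.exp (-t) ≤ -|t| := by
  rcases le_total 0 t with ht | ht
  · rw [abs_of_nonneg ht]
    linarith [Real.exp_pos (-t)]
  · rw [abs_of_nonpos ht]
    nlinarith [Real.quadratic_le_exp_of_nonneg (neg_nonneg.2 ht), sq_nonneg (t + 1)]

lemma gumbelPdf_le_exp_neg_abs (z : ℝ) :
    gumbelPdf z ≤ Real.exp (-|z + eulerMascheroniConstant|) := by
  rw [gumbelPdf, ← neg_add']
  exact Real.exp_le_exp.2 (neg_sub_exp_neg_le_neg_abs _)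

lemma integrable_exp_neg_abs_mul_abs_rpow {s : ℝ} (hs : 0 < s) :
    Integrable fun x : ℝ => Real.exp (-|x|) * |x| ^ (s - 1) := by
  have h : ∫ x : ℝ, Real.exp (-|x|) * |x| ^ (s - 1) = 2 * Real.Gamma s := by
    rw [integral_comp_abs (f := fun x => Real.exp (-x) * x ^ (s - 1)), Real.Gamma_eq_integral hs]
  -- The Bochner integral of a non-integrable function would be zero.
  exact .of_integral_ne_zero (h ▸ by positivity)

lemma integrable_exp_neg_abs : Integrable fun x : ℝ => Real.exp (-|x|) := by
  simpa using integrable_exp_neg_abs_mul_abs_rpow one_pos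

lemma integrable_abs_mul_exp_neg_abs : Integrable fun x : ℝ => |x| * Real.exp (-|x|) := by
  have h := integrable_exp_neg_abs_mul_abs_rpow two_pos
  norm_num at h
  simpa only [mul_comm] using h

lemma integrable_gumbelPdf : Integrable gumbelPdf := by
  refine (integrable_exp_neg_abs.comp_add_right eulerMascheroniConstant).mono'
    continuous_gumbelPdf.aestronglyMeasurable (ae_of_all _ fun z => ?_)
  rw [Real.norm_of_nonneg (gumbelPdf_nonneg z)]
  exact gumbelPdf_le_exp_neg_abs z

lemma integrable_abs_mul_gumbelPdf : Integrable fun z : ℝ => |z| * gumbelPdf z := by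
  refine (((integrable_abs_mul_exp_neg_abs.add (integrable_exp_neg_abs.const_mul
    |eulerMascheroniConstant|)).comp_add_right eulerMascheroniConstant).mono'
    (continuous_abs.mul continuous_gumbelPdf).aestronglyMeasurable (ae_of_all _ fun z => ?_))
  rw [Real.norm_of_nonneg (mul_nonneg (abs_nonneg z) (gumbelPdf_nonneg z))]
  have hz : |z| ≤ |z + eulerMascheroniConstant| + |eulerMascheroniConstant| := by
    simpa using abs_sub (z + eulerMascheroniConstant) eulerMascheroniConstant
  grw [gumbelPdf_le_exp_neg_abs z, hz, add_mul]
  rfl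

lemma hasDerivAt_exp_neg_exp_neg_gumbelPdf (z : ℝ) :
    HasDerivAt (fun x => Real.exp (-Real.exp (-(x + eulerMascheroniConstant))))
      (gumbelPdf z) z := by
  convert ((hasDerivAt_id' z).add_const eulerMascheroniConstant).fun_neg.exp.fun_neg.exp using 1
  rw [mul_neg_one, neg_neg, ← Real.exp_add, gumbelPdf]
  ring_nf

lemma integral_gumbelPdf : ∫ z, gumbelPdf z = 1 := by
  have hbot : Tendsto (fun x => Real.exp (-Real.exp (-(x + eulerMascheroniConstant))))
      atBot (𝓝 0) :=
    tendsto_exp_atBot.comp <| tendsto_neg_atTop_atBot.comp <| tendsto_exp_atTop.comp <|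
      tendsto_neg_atBot_atTop.comp <| tendsto_atBot_add_const_right _ _ tendsto_id
  have htop : Tendsto (fun x => Real.exp (-Real.exp (-(x + eulerMascheroniConstant))))
      atTop (𝓝 1) := by
    have hexp : Tendsto (fun x => Real.exp (-(x + eulerMascheroniConstant))) atTop (𝓝 0) :=
      tendsto_exp_atBot.comp <| tendsto_neg_atTop_atBot.comp <|
        tendsto_atTop_add_const_right _ _ tendsto_id
    simpa using hexp.neg.rexp
  simpa using integral_of_hasDerivAt_of_tendsto hasDerivAt_exp_neg_exp_neg_gumbelPdf
    integrable_gumbelPdf hbot htop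

variable {J : ℕ}

lemma mGumbelPdf_zero_one (y : Fin J → ℝ) : mGumbelPdf 0 1 y = ∏ j, gumbelPdf (y j) := by
  simp [mGumbelPdf]

lemma mGumbelPdf_eq_locationScalePdf (μ : Fin J → ℝ) (σ : ℝ) :
    mGumbelPdf μ σ = locationScalePdf (mGumbelPdf 0 1) μ σ := by
  funext z
  simp [locationScalePdf, mGumbelPdf, Finset.prod_mul_distrib, div_eq_inv_mul]

lemma integral_mGumbelPdf_zero_one : ∫ y : Fin J → ℝ, mGumbelPdf 0 1 y = 1 := by
  simp_rw [mGumbelPdf_zero_one]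
  rw [integral_fintype_prod_volume_eq_prod fun _ => gumbelPdf]
  simp [integral_gumbelPdf]

lemma integrable_norm_mul_of_forall_integrable_abs_mul {ι : Type*} [Fintype ι]
    {ν : Measure (ι → ℝ)} {f : (ι → ℝ) → ℝ} (hf : AEStronglyMeasurable f ν)
    (h : ∀ i, Integrable (fun z => |z i| * f z) ν) : Integrable (fun z => ‖z‖ * f z) ν := by
  refine (integrable_finsetSum Finset.univ fun i _ => (h i).norm).mono'
    (continuous_norm.aestronglyMeasurable.mul hf) (ae_of_all _ fun z => ?_)
  have hz : ‖z‖ ≤ ∑ i, |z i| := (pi_norm_le_iff_of_nonneg (by positivity)).2 fun i =>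
    Finset.single_le_sum (f := fun i => |z i|) (fun _ _ => abs_nonneg _) (Finset.mem_univ i)
  simp only [norm_mul, Real.norm_eq_abs, abs_abs, abs_norm, ← Finset.sum_mul]
  gcongr

lemma integrable_norm_mul_mGumbelPdf_zero_one :
    Integrable fun y : Fin J → ℝ => ‖y‖ * mGumbelPdf 0 1 y := by
  refine integrable_norm_mul_of_forall_integrable_abs_mul
    (integrable_of_integral_eq_one integral_mGumbelPdf_zero_one).aestronglyMeasurable fun i => ?_
  have hprod (y : Fin J → ℝ) : |y i| * mGumbelPdf 0 1 y =
      ∏ j, (if j = i then |y j| else 1) * gumbelPdf (y j) := by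
    rw [mGumbelPdf_zero_one, Finset.prod_mul_distrib, Fintype.prod_ite_eq']
  simp_rw [hprod]
  refine Integrable.fintype_prod (f := fun j z => (if j = i then |z| else 1) * gumbelPdf z)
    fun j => ?_
  split_ifs
  · exact integrable_abs_mul_gumbelPdf
  · simpa using integrable_gumbelPdf

end Gumbel

section Choice

variable {J : ℕ}

lemma continuous_epsExt (j : Fin (J + 1)) : Continuous fun z : Fin J → ℝ => epsExt z j := by
  refine Fin.cases continuous_const (fun i => ?_) j
  exact continuous_apply i

lemma abs_epsExt_le_norm (z : Fin J → ℝ) (j : Fin (J + 1)) : |epsExt z j| ≤ ‖z‖ := by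
  refine Fin.cases ?_ (fun i => ?_) j
  · simp [epsExt]
  · exact norm_le_pi_norm z i

lemma epsExt_add_smul (a b : ℝ) (y z : Fin J → ℝ) (j : Fin (J + 1)) :
    epsExt (a • y + b • z) j = a * epsExt y j + b * epsExt z j := by
  refine Fin.cases ?_ (fun i => ?_) j <;> simp [epsExt]

/-- The utility of an optimal alternative under the shocks `z`, given the choice-specific values
`v` net of shocks. -/
noncomputable def maxUtility (v : Fin (J + 1) → ℝ) (z : Fin J → ℝ) : ℝ :=
  Finset.univ.sup' Finset.univ_nonempty fun j => v j + epsExt z j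

lemma continuous_maxUtility (v : Fin (J + 1) → ℝ) : Continuous (maxUtility v) :=
  Continuous.finset_sup'_apply Finset.univ_nonempty fun j _ =>
    (continuous_epsExt j).const_add (v j)

lemma hasLinearGrowth_maxUtility (v : Fin (J + 1) → ℝ) : HasLinearGrowth (maxUtility v) := by
  refine ⟨1 + ‖v‖, fun z => ?_⟩
  obtain ⟨j, -, hj⟩ := Finset.exists_mem_eq_sup' Finset.univ_nonempty fun j => v j + epsExt z j
  calc ‖maxUtility v z‖ = |v j + epsExt z j| := by rw [maxUtility, hj, Real.norm_eq_abs]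
    _ ≤ ‖v‖ + ‖z‖ := (abs_add_le _ _).trans (add_le_add (norm_le_pi_norm v j)
      (abs_epsExt_le_norm z j))
    _ ≤ (1 + ‖v‖) * (1 + ‖z‖) := by nlinarith [mul_nonneg (norm_nonneg v) (norm_nonneg z)]

/-- The set of shocks under which alternative `d` is optimal, given the choice-specific values `v`
net of shocks; its probability is the choice probability of `d`. -/
def choiceRegion (v : Fin (J + 1) → ℝ) (d : Fin (J + 1)) : Set (Fin J → ℝ) :=
  {z | ∀ j, v j + epsExt z j ≤ v d + epsExt z d}

lemma isClosed_choiceRegion (v : Fin (J + 1) → ℝ) (d : Fin (J + 1)) :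
    IsClosed (choiceRegion v d) := by
  rw [choiceRegion, Set.ofPred_forall]
  exact isClosed_iInter fun j => isClosed_le ((continuous_epsExt j).const_add _)
    ((continuous_epsExt d).const_add _)

lemma convex_choiceRegion (v : Fin (J + 1) → ℝ) (d : Fin (J + 1)) :
    Convex ℝ (choiceRegion v d) := by
  intro y hy z hz a b ha hb hab j
  have hcomb : ∀ i, v i + epsExt (a • y + b • z) i =
      a * (v i + epsExt y i) + b * (v i + epsExt z i) := fun i => by
    rw [epsExt_add_smul]
    linear_combination (-v i) * hab
  rw [hcomb, hcomb]
  exact add_le_add (mul_le_mul_of_nonneg_left (hy j) ha) (mul_le_mul_of_nonneg_left (hz j) hb)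

lemma ae_continuousAt_indicator_choiceRegion (v : Fin (J + 1) → ℝ) (d : Fin (J + 1)) :
    ∀ᵐ z, ContinuousAt ((choiceRegion v d).indicator fun _ => (1 : ℝ)) z := by
  have h := (convex_choiceRegion v d).addHaar_frontier volume
  filter_upwards [measure_eq_zero_iff_ae_notMem.1 h] with z hz
  exact continuousOn_const.continuousAt_indicator hz

end Choice

lemma integral_mul_indicator_one {α : Type*} [MeasurableSpace α] {ν : Measure α} {s : Set α}
    (hs : MeasurableSet s) (f : α → ℝ) :
    ∫ z, f z * s.indicator (fun _ => 1) z ∂ν = ∫ z in s, f z ∂ν := by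
  simp_rw [← Set.indicator_mul_right, mul_one]
  exact integral_indicator hs

theorem exact_matching_of_ccps_general {X : Type*} [Finite X] {J : ℕ}
    (v : X → Fin (J + 1) → ℝ) {f : (Fin J → ℝ) → ℝ} (hf : ∀ᵐ z, 0 < f z) (hf1 : ∫ z, f z = 1)
    (hfmom : ∀ j, Integrable fun z : Fin J → ℝ => |z j| * f z) :
    ∃ (m : ℕ) (ω : Fin m → ℝ) (μ : Fin m → Fin J → ℝ) (σ : ℝ),
      1 ≤ m ∧ (∀ k, 0 < ω k) ∧ ∑ k, ω k = 1 ∧ 0 < σ ∧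
      (∀ x, ∫ z, maxUtility (v x) z * f z =
        ∫ z, maxUtility (v x) z * ∑ k, ω k * mGumbelPdf (μ k) σ z) ∧
      ∀ d x, ∫ z in choiceRegion (v x) d, f z =
        ∫ z in choiceRegion (v x) d, ∑ k, ω k * mGumbelPdf (μ k) σ z := by
  have hmeas : ∀ d x, MeasurableSet (choiceRegion (v x) d) := fun d x =>
    (isClosed_choiceRegion (v x) d).measurableSet
  let g : X ⊕ (Fin (J + 1) × X) → (Fin J → ℝ) → ℝ := Sum.elim (fun x => maxUtility (v x))
    fun p => (choiceRegion (v p.2) p.1).indicator fun _ => 1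
  obtain ⟨m, ω, μ, σ, hω, hω1, hσ, hmatch⟩ := exists_locationScale_mixture_forall_integral_eq
    (g := g) integral_mGumbelPdf_zero_one integrable_norm_mul_mGumbelPdf_zero_one hf hf1
    (integrable_norm_mul_of_forall_integrable_abs_mul
      (integrable_of_integral_eq_one hf1).aestronglyMeasurable hfmom)
    (Sum.rec (fun _ => hasLinearGrowth_maxUtility _) fun _ => hasLinearGrowth_indicator_one _)
    (Sum.rec (fun _ => (continuous_maxUtility _).measurable)
      fun p => measurable_const.indicator (hmeas p.1 p.2))
    (Sum.rec (fun _ => ae_of_all _ fun _ => (continuous_maxUtility _).continuousAt)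
      fun _ => ae_continuousAt_indicator_choiceRegion _ _)
  simp_rw [← mGumbelPdf_eq_locationScalePdf] at hmatch
  refine ⟨m, ω, μ, σ, ?_, hω, hω1, hσ, fun x => ?_, fun d x => ?_⟩
  · exact Nat.one_le_iff_ne_zero.2 fun hm => by subst hm; simp at hω1
  · simpa only [g, Sum.elim_inl, mul_comm] using hmatch (Sum.inl x)
  · simpa only [g, Sum.elim_inr, integral_mul_indicator_one (hmeas d x)] using
      hmatch (Sum.inr (d, x))

/-- Exact matching of conditional choice probabilities: for any shock distribution with a
positive density, there is a finite Gumbel mixture generating the same CCPs. -/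
theorem exact_matching_of_ccps
    (K J : ℕ) (hK : 1 ≤ K) (hJ : 1 ≤ J)
    (u : Fin K → Fin (J + 1) → ℝ) (β : ℝ) (hβ0 : 0 ≤ β) (hβ1 : β < 1)
    (G : Fin (J + 1) → Fin K → Fin K → ℝ)
    (hGpos : ∀ d x y, 0 ≤ G d x y) (hGsum : ∀ d x, ∑ y, G d x y = 1)
    -- the data generating shock distribution `F₀` has a positive density `f0`
    (f0 : (Fin J → ℝ) → ℝ)
    (hf0meas : Measurable f0) (hf0pos : ∀ z, 0 < f0 z)
    (hf0int : Integrable f0) (hf0prob : ∫ z, f0 z = 1)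
    (hf0mom : ∀ j, Integrable fun z : Fin J → ℝ => |z j| * f0 z)
    -- `Q0` solves the Bellman equation under `F₀`
    (Q0 : Fin K → ℝ)
    (hQ0 : ∀ x, Q0 x = ∫ z : Fin J → ℝ,
      (Finset.univ.sup' Finset.univ_nonempty
        (fun j : Fin (J + 1) => u x j + β * ∑ y, G j x y * Q0 y + epsExt z j)) * f0 z) :
    -- there is a finite Gumbel mixture with the same CCPs
    ∃ (m : ℕ) (ω : Fin m → ℝ) (μ : Fin m → Fin J → ℝ) (σ : ℝ) (Q1 : Fin K → ℝ),
      1 ≤ m ∧ (∀ k, 0 < ω k) ∧ (∑ k, ω k = 1) ∧ 0 < σ ∧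
      (∀ x, Q1 x = ∫ z : Fin J → ℝ,
        (Finset.univ.sup' Finset.univ_nonempty
          (fun j : Fin (J + 1) => u x j + β * ∑ y, G j x y * Q1 y + epsExt z j)) *
            (∑ k, ω k * mGumbelPdf (μ k) σ z)) ∧
      ∀ (d : Fin (J + 1)) (x : Fin K),
        (∫ z in {z : Fin J → ℝ | ∀ j : Fin (J + 1),
            u x j + β * ∑ y, G j x y * Q0 y + epsExt z j ≤
              u x d + β * ∑ y, G d x y * Q0 y + epsExt z d}, f0 z) =
        (∫ z in {z : Fin J → ℝ | ∀ j : Fin (J + 1),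
            u x j + β * ∑ y, G j x y * Q1 y + epsExt z j ≤
              u x d + β * ∑ y, G d x y * Q1 y + epsExt z d},
          (∑ k, ω k * mGumbelPdf (μ k) σ z)) := by
  obtain ⟨m, ω, μ, σ, hm, hω, hω1, hσ, hQ, hp⟩ := exact_matching_of_ccps_general
    (fun x j => u x j + β * ∑ y, G j x y * Q0 y) (ae_of_all _ hf0pos) hf0prob hf0mom
  exact ⟨m, ω, μ, σ, Q0, hm, hω, hω1, hσ, fun x => (hQ0 x).trans (hQ x), hp⟩
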